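/- arXiv:2411.18773 — 2 statements merged into one kernel-verified Lean document; each statement's English description precedes it below -/
import Mathlib

section
/- Let A be an l×r real matrix, B an r×d real matrix, and M a d×K real matrix. Then A B M = V_{B^⊤, l}^⊤ (I_d ⊗ vec(A^⊤) vec(M)^⊤) V_{I_d, K}, where vec(A^⊤) vec(M)^⊤ denotes the (rl)×(dK) outer-product matrix. -/
open Matrix
open scoped Kronecker

noncomputable section

/-- `vec` of a matrix: the column vector obtained by stacking the columns of `M`
on top of one another.  With product-type indexing, `mvec M (j, i) = M i j`. -/
def mvec {m n : Type*} (M : Matrix m n ℝ) : n × m → ℝ := fun p => M p.2 p.1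

/-- A vector viewed as a column matrix. -/
def colMat {m : Type*} (v : m → ℝ) : Matrix m Unit ℝ := Matrix.of fun i _ => v i

/-- `V_{H,K}`: the matrix obtained by stacking vertically the blocks `I_K ⊗ h_i`,
where `h_i` is the `i`-th row of `H` viewed as a column vector. -/
def VHK {n d : Type*} (K : ℕ) (H : Matrix n d ℝ) :
    Matrix (n × (Fin K × d)) (Fin K) ℝ :=
  Matrix.of fun pr q =>
    ((1 : Matrix (Fin K) (Fin K) ℝ) ⊗ₖ colMat (fun i => H pr.1 i)) pr.2 (q, ())

/-!
Let `V_{h,K} = I_K ⊗ h` denote a single block. The identity factor of the Kronecker product pairs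
the `i`-th block of one stack with the `i`-th block of the other, and a block acts on a vectorized
matrix by `vec(M)ᵀ V_{h,K} = hᵀ M`. So for stacks built from `H` and `G` the product is
`∑ᵢ (A hᵢ) (gᵢᵀ M) = A (Hᵀ G) M`; take `H = Bᵀ` and `G = I`.
-/

section BlockDecomposition

variable {R m n p q s : Type*} [Fintype n]

lemma mul_eq_sum_vecMulVec_col_row [NonUnitalNonAssocSemiring R]
    (P : Matrix m n R) (Q : Matrix n p R) :
    P * Q = ∑ i, vecMulVec (P.col i) (Q.row i) := by
  ext a b
  simp [mul_apply, Matrix.sum_apply, vecMulVec_apply]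

lemma mul_one_kronecker_mul_eq_sum [NonAssocSemiring R] [Fintype p] [Fintype q] [DecidableEq n]
    (P : Matrix m (n × p) R) (X : Matrix p q R) (Q : Matrix (n × q) s R) :
    P * ((1 : Matrix n n R) ⊗ₖ X) * Q =
      ∑ i, P.submatrix id (Prod.mk i) * X * Q.submatrix (Prod.mk i) id := by
  ext a b
  simp [mul_apply, Matrix.sum_apply, Fintype.sum_prod_type, one_apply]

end BlockDecomposition

section StackedBlocks

variable {n d : Type*} [Fintype d] {K : ℕ}

lemma mvec_vecMul_VHK_block (M : Matrix d (Fin K) ℝ) (H : Matrix n d ℝ) (i : n) :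
    mvec M ᵥ* (VHK K H).submatrix (Prod.mk i) id = H.row i ᵥ* M := by
  have vec_row : vec M ᵥ* ((1 : Matrix (Fin K) (Fin K) ℝ) ⊗ₖ colMat (H.row i)) =
      vec ((colMat (H.row i))ᵀ * M) := by
    rw [vec_vecMul_kronecker, Matrix.mul_one]
  ext k
  -- `VHK` is `I_K ⊗ hᵢ` with the `Unit` column index dropped, so the two sides agree by unfolding.
  exact congrFun vec_row (k, ())

lemma VHK_block_transpose_mulVec_mvec (A : Matrix (Fin K) d ℝ) (H : Matrix n d ℝ) (i : n) :
    (VHK K H)ᵀ.submatrix id (Prod.mk i) *ᵥ mvec Aᵀ = A *ᵥ H.row i := by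
  rw [← transpose_submatrix, mulVec_transpose, mvec_vecMul_VHK_block, vecMul_transpose]

end StackedBlocks

theorem statement1_general {n r d : Type*} [Fintype n] [DecidableEq n] [Fintype r] [Fintype d]
    {l K : ℕ} (A : Matrix (Fin l) r ℝ) (H : Matrix n r ℝ) (G : Matrix n d ℝ)
    (M : Matrix d (Fin K) ℝ) :
    A * (Hᵀ * G) * M =
      (VHK l H)ᵀ * ((1 : Matrix n n ℝ) ⊗ₖ vecMulVec (mvec Aᵀ) (mvec M)) * VHK K G := by
  symm
  calc
    (VHK l H)ᵀ * ((1 : Matrix n n ℝ) ⊗ₖ vecMulVec (mvec Aᵀ) (mvec M)) * VHK K G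
    _ = ∑ i, (VHK l H)ᵀ.submatrix id (Prod.mk i) * vecMulVec (mvec Aᵀ) (mvec M) *
          (VHK K G).submatrix (Prod.mk i) id :=
      mul_one_kronecker_mul_eq_sum _ _ _
    _ = ∑ i, vecMulVec (A *ᵥ H.row i) (G.row i ᵥ* M) := by
      simp only [mul_vecMulVec, vecMulVec_mul, VHK_block_transpose_mulVec_mvec,
        mvec_vecMul_VHK_block]
    _ = A * (∑ i, vecMulVec (H.row i) (G.row i)) * M := by
      simp only [← mul_vecMulVec, ← vecMulVec_mul, Matrix.mul_sum, Matrix.sum_mul]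
    _ = A * (Hᵀ * G) * M := by
      rw [mul_eq_sum_vecMulVec_col_row Hᵀ G, col_transpose]

/-- Remark S.1:
`A B M = V_{Bᵀ,l}ᵀ (I_d ⊗ vec(Aᵀ) vec(M)ᵀ) V_{I_d,K}`. -/
theorem statement1 (l r d K : ℕ) (hl : 0 < l) (hr : 0 < r) (hd : 0 < d) (hK : 0 < K)
    (A : Matrix (Fin l) (Fin r) ℝ) (B : Matrix (Fin r) (Fin d) ℝ)
    (M : Matrix (Fin d) (Fin K) ℝ) :
    A * B * M =
      (VHK l Bᵀ)ᵀ *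
        ((1 : Matrix (Fin d) (Fin d) ℝ) ⊗ₖ Matrix.vecMulVec (mvec Aᵀ) (mvec M)) *
        VHK K (1 : Matrix (Fin d) (Fin d) ℝ) := by
  simpa only [transpose_transpose, Matrix.mul_one] using statement1_general A Bᵀ 1 M
end
end

section
/- Suppose the r×r matrix X^⊤ B^ν (B^ν)^⊤ X is invertible. Then for every φ ∈ ℝ^L, B^⊤ X_{β(φ)} vec(I_d) = Ξ (y^ν − Y_W φ); consequently, B^⊤ y − B^⊤ V φ − B^⊤ X_{β(φ)} vec(I_d) = (B^⊤ y − Ξ y^ν) − (B^⊤ V − Ξ Y_W) φ. -/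
open Matrix
open scoped Kronecker

noncomputable section

/-- A vector viewed as a row matrix. -/
def rowMat {n : Type*} (v : n → ℝ) : Matrix Unit n ℝ := Matrix.of fun _ j => v j

/-- `B̄ := T⁻¹ Σ_t B_t`. -/
def Bbar {d T v : ℕ} (B : Fin T → Matrix (Fin d) (Fin v) ℝ) :
    Matrix (Fin d) (Fin v) ℝ :=
  (T : ℝ)⁻¹ • ∑ t, B t

/-- `B^ν`: the vertical stack of the blocks `B_t − B̄`. -/
def Bnu {d T v : ℕ} (B : Fin T → Matrix (Fin d) (Fin v) ℝ) :
    Matrix (Fin T × Fin d) (Fin v) ℝ :=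
  Matrix.of fun q s => (B q.1 - Bbar B) q.2 s

/-- `X`: the vertical stack of the matrices `X_t`. -/
def Xstack {d T r : ℕ} (X : Fin T → Matrix (Fin d) (Fin r) ℝ) :
    Matrix (Fin T × Fin d) (Fin r) ℝ :=
  Matrix.of fun q s => X q.1 q.2 s

/-- The vertical stack `(w_1ᵀ, …, w_Tᵀ)ᵀ ∈ ℝ^{Td}` (used for `y^ν`, `ε^ν`). -/
def enu {d T : ℕ} (w : Fin T → Fin d → ℝ) : Fin T × Fin d → ℝ := fun q => w q.1 q.2

/-- `vec((w_1, …, w_T)ᵀ) ∈ ℝ^{Td}` (used for the vectorized `y` and `ε`). -/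
def yvec {d T : ℕ} (w : Fin T → Fin d → ℝ) : Fin d × Fin T → ℝ := fun q => w q.2 q.1

/-- The `r × r` matrix `Xᵀ B^ν (B^ν)ᵀ X`. -/
def Gram {d T r v : ℕ} (X : Fin T → Matrix (Fin d) (Fin r) ℝ)
    (B : Fin T → Matrix (Fin d) (Fin v) ℝ) : Matrix (Fin r) (Fin r) ℝ :=
  (Xstack X)ᵀ * Bnu B * (Bnu B)ᵀ * Xstack X

/-- The profiled least-squares coefficient `β(φ)`. -/
def betaOf {d T p r v : ℕ} (l : Fin p → ℕ) (W : Fin p → Matrix (Fin d) (Fin d) ℝ)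
    (z : Fin T → (j : Fin p) → Fin (l j + 1) → ℝ)
    (y : Fin T → Fin d → ℝ) (X : Fin T → Matrix (Fin d) (Fin r) ℝ)
    (B : Fin T → Matrix (Fin d) (Fin v) ℝ)
    (φ : ((j : Fin p) × Fin (l j + 1)) → ℝ) : Fin r → ℝ :=
  ((Gram X B)⁻¹ * (Xstack X)ᵀ * Bnu B * (Bnu B)ᵀ).mulVec
    (enu y - ∑ jk : (j : Fin p) × Fin (l j + 1),
      φ jk • ((1 : Matrix (Fin T) (Fin T) ℝ) ⊗ₖ W jk.1).mulVec
        (fun q : Fin T × Fin d => z q.1 jk.1 jk.2 * y q.1 q.2))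

/-- `(I_T ⊗ γᵀ)(B₁ − B̄, …, B_T − B̄)ᵀ`, a `T × d` matrix. -/
def Gmat {d T v : ℕ} (B : Fin T → Matrix (Fin d) (Fin v) ℝ) (γ : Fin v → ℝ) :
    Matrix (Fin T) (Fin d) ℝ :=
  Matrix.submatrix (((1 : Matrix (Fin T) (Fin T) ℝ) ⊗ₖ rowMat γ) *
      (Matrix.of fun i (q : Fin T × Fin v) => (B q.1 - Bbar B) i q.2)ᵀ)
    (fun t => (t, ())) id

/-- `B := κ · I_d ⊗ {(I_T ⊗ γᵀ)(B₁ − B̄, …, B_T − B̄)ᵀ}`, a `(Td) × d²` matrix. -/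
def augB {d T v : ℕ} (B : Fin T → Matrix (Fin d) (Fin v) ℝ) (γ : Fin v → ℝ)
    (κ : ℝ) : Matrix (Fin d × Fin T) (Fin d × Fin d) ℝ :=
  κ • ((1 : Matrix (Fin d) (Fin d) ℝ) ⊗ₖ Gmat B γ)

/-- `X_c := I_d ⊗ {(I_T ⊗ cᵀ)(X₁, …, X_T)ᵀ}`, a `(Td) × d²` matrix. -/
def augX {d T r : ℕ} (X : Fin T → Matrix (Fin d) (Fin r) ℝ) (c : Fin r → ℝ) :
    Matrix (Fin d × Fin T) (Fin d × Fin d) ℝ :=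
  (1 : Matrix (Fin d) (Fin d) ℝ) ⊗ₖ
    Matrix.submatrix (((1 : Matrix (Fin T) (Fin T) ℝ) ⊗ₖ rowMat c) *
        (Matrix.of fun i (q : Fin T × Fin r) => X q.1 i q.2)ᵀ)
      (fun t => (t, ())) id

/-- `vec(I_d)`. -/
def vecId (d : ℕ) : Fin d × Fin d → ℝ := mvec (1 : Matrix (Fin d) (Fin d) ℝ)

/-- `X_t ⊗ (B_t − B̄)γ`, a `d² × r` matrix. -/
def kronXB {d T r v : ℕ} (X : Fin T → Matrix (Fin d) (Fin r) ℝ)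
    (B : Fin T → Matrix (Fin d) (Fin v) ℝ) (γ : Fin v → ℝ) (t : Fin T) :
    Matrix (Fin d × Fin d) (Fin r) ℝ :=
  Matrix.submatrix ((X t) ⊗ₖ colMat ((B t - Bbar B).mulVec γ)) id (fun s => (s, ()))

/-- `Ξ := κ (Σ_t X_t ⊗ (B_t − B̄)γ)(Xᵀ B^ν (B^ν)ᵀ X)⁻¹ Xᵀ B^ν (B^ν)ᵀ`. -/
def Xi {d T r v : ℕ} (X : Fin T → Matrix (Fin d) (Fin r) ℝ)
    (B : Fin T → Matrix (Fin d) (Fin v) ℝ) (γ : Fin v → ℝ) (κ : ℝ) :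
    Matrix (Fin d × Fin d) (Fin T × Fin d) ℝ :=
  κ • ((∑ t, kronXB X B γ t) * (Gram X B)⁻¹ * (Xstack X)ᵀ * Bnu B * (Bnu B)ᵀ)

/-- `Γ_{j,k} := I_d ⊗ (z_{j,k,1} y_1, …, z_{j,k,T} y_T)ᵀ` (for weights `w t = z_{j,k,t}`). -/
def Gamma {d T : ℕ} (w : Fin T → ℝ) (y : Fin T → Fin d → ℝ) :
    Matrix (Fin d × Fin T) (Fin d × Fin d) ℝ :=
  (1 : Matrix (Fin d) (Fin d) ℝ) ⊗ₖ Matrix.of fun t i => w t * y t i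

/-- `V`: the `(Td) × L` matrix whose `(j,k)`-th column is `Γ_{j,k} vec(W_jᵀ)`. -/
def Vmat {d T p : ℕ} (l : Fin p → ℕ) (W : Fin p → Matrix (Fin d) (Fin d) ℝ)
    (z : Fin T → (j : Fin p) → Fin (l j + 1) → ℝ) (y : Fin T → Fin d → ℝ) :
    Matrix (Fin d × Fin T) ((j : Fin p) × Fin (l j + 1)) ℝ :=
  Matrix.of fun q c => (Gamma (fun t => z t c.1 c.2) y).mulVec (mvec (W c.1)ᵀ) q

/-- `Y_W`: the `(Td) × L` matrix whose `(j,k)`-th column is `(I_T ⊗ W_j) y^ν_{j,k}`. -/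
def YW {d T p : ℕ} (l : Fin p → ℕ) (W : Fin p → Matrix (Fin d) (Fin d) ℝ)
    (z : Fin T → (j : Fin p) → Fin (l j + 1) → ℝ) (y : Fin T → Fin d → ℝ) :
    Matrix (Fin T × Fin d) ((j : Fin p) × Fin (l j + 1)) ℝ :=
  Matrix.of fun q c =>
    ((1 : Matrix (Fin T) (Fin T) ℝ) ⊗ₖ W c.1).mulVec
      (fun q' : Fin T × Fin d => z q'.1 c.1 c.2 * y q'.1 q'.2) q

/-!
Under `vec`, multiplication by `I ⊗ A` becomes left multiplication by `A`, so `X_c vec(I_d)` is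
`vec` of the matrix with rows `X_t c`, and `Bᵀ` of it is `κ vec(Gᵀ M)` where `G` has rows
`(B_t - B̄)γ` and `M` has rows `X_t c`. Expanding `Gᵀ M` as a sum of outer products of rows, and
using `vec(g (X c)ᵀ) = (X ⊗ g) c`, shows that `Bᵀ X_c vec(I_d)` is the linear function
`κ (∑ t, X_t ⊗ (B_t - B̄)γ) c` of `c`. Since `β(φ)` is affine in `φ`, substituting `c = β(φ)`
gives an explicit affine function of `φ`.
-/

section Kronecker

variable {R ι τ m n : Type*}

theorem transpose_mul_eq_sum_vecMulVec [NonUnitalNonAssocSemiring R] [Fintype τ]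
    (A : Matrix τ m R) (M : Matrix τ n R) : Aᵀ * M = ∑ t, vecMulVec (A t) (M t) := by
  ext i j
  simp only [mul_apply, transpose_apply, Matrix.sum_apply, vecMulVec_apply]

theorem one_kronecker_transpose_mulVec_vec [Semiring R] [Fintype τ] [Fintype n] [DecidableEq n]
    (A : Matrix τ m R) (M : Matrix τ n R) :
    ((1 : Matrix n n R) ⊗ₖ A)ᵀ *ᵥ vec M = vec (Aᵀ * M) := by
  rw [← kroneckerMap_transpose, transpose_one, vec_mul_eq_mulVec]

theorem one_kronecker_replicateRow_mul_transpose_apply [CommSemiring R] [Fintype τ]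
    [DecidableEq τ] [Fintype n] (A : τ → Matrix m n R) (c : n → R) (t : τ) (k : ι) (i : m) :
    (((1 : Matrix τ τ R) ⊗ₖ replicateRow ι c) * (of fun i (q : τ × n) => A q.1 i q.2)ᵀ) (t, k) i
      = (A t *ᵥ c) i := by
  simp [mul_apply, Fintype.sum_prod_type, one_apply, mulVec, dotProduct, mul_comm]

theorem submatrix_kronecker_replicateCol_mulVec [NonUnitalCommSemiring R] [Fintype τ]
    (A : Matrix m τ R) (g : n → R) (k : ι) (c : τ → R) :
    (A ⊗ₖ replicateCol ι g).submatrix id (fun s => (s, k)) *ᵥ c = vec (vecMulVec g (A *ᵥ c)) := by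
  ext ⟨i, j⟩
  simp only [mulVec, dotProduct, submatrix_apply, id, kroneckerMap_apply, replicateCol_apply, vec,
    vecMulVec_apply, Finset.mul_sum]
  exact Finset.sum_congr rfl fun s _ => by rw [mul_comm (A i s), mul_assoc]

end Kronecker

section Profiled

variable {d T p r v : ℕ} (X : Fin T → Matrix (Fin d) (Fin r) ℝ)
  (B : Fin T → Matrix (Fin d) (Fin v) ℝ) (γ : Fin v → ℝ) (κ : ℝ)

theorem Gmat_eq_of : Gmat B γ = of fun t => (B t - Bbar B) *ᵥ γ := by
  ext t i
  exact one_kronecker_replicateRow_mul_transpose_apply (fun t => B t - Bbar B) γ t () i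

theorem augX_eq_one_kronecker (c : Fin r → ℝ) :
    augX X c = (1 : Matrix (Fin d) (Fin d) ℝ) ⊗ₖ of fun t => X t *ᵥ c := by
  rw [augX]
  congr 1
  ext t i
  exact one_kronecker_replicateRow_mul_transpose_apply X c t () i

theorem augX_mulVec_vecId (c : Fin r → ℝ) :
    augX X c *ᵥ vecId d = vec (of fun t => X t *ᵥ c) := by
  have vecId_eq : vecId d = vec 1 := rfl
  rw [augX_eq_one_kronecker, vecId_eq, ← vec_mul_eq_mulVec, Matrix.mul_one]

theorem kronXB_mulVec (t : Fin T) (c : Fin r → ℝ) :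
    kronXB X B γ t *ᵥ c = vec (vecMulVec ((B t - Bbar B) *ᵥ γ) (X t *ᵥ c)) :=
  submatrix_kronecker_replicateCol_mulVec (X t) _ () c

theorem augB_transpose_mulVec_augX_mulVec_vecId (c : Fin r → ℝ) :
    (augB B γ κ)ᵀ *ᵥ (augX X c *ᵥ vecId d) = κ • ((∑ t, kronXB X B γ t) *ᵥ c) :=
  calc (augB B γ κ)ᵀ *ᵥ (augX X c *ᵥ vecId d)
      = κ • vec ((Gmat B γ)ᵀ * of fun t => X t *ᵥ c) := by
        rw [augX_mulVec_vecId, augB, transpose_smul, smul_mulVec,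
          one_kronecker_transpose_mulVec_vec]
    _ = κ • ∑ t, vec (vecMulVec ((B t - Bbar B) *ᵥ γ) (X t *ᵥ c)) := by
        rw [Gmat_eq_of, transpose_mul_eq_sum_vecMulVec, vec_sum]
        rfl
    _ = κ • ((∑ t, kronXB X B γ t) *ᵥ c) := by
        simp only [sum_mulVec, kronXB_mulVec]

/-- The matrix `(Xᵀ B^ν (B^ν)ᵀ X)⁻¹ Xᵀ B^ν (B^ν)ᵀ` of the instrumental-variables estimator with
regressors `X` and instruments `B^ν`: it sends a response vector to its estimated coefficient. -/
def ivEstimator : Matrix (Fin r) (Fin T × Fin d) ℝ :=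
  (Gram X B)⁻¹ * (Xstack X)ᵀ * Bnu B * (Bnu B)ᵀ

theorem Xi_eq_smul_mul_ivEstimator :
    Xi X B γ κ = κ • ((∑ t, kronXB X B γ t) * ivEstimator X B) := by
  simp only [Xi, ivEstimator, Matrix.mul_assoc]

theorem augB_transpose_mulVec_augX_ivEstimator_mulVec_vecId (u : Fin T × Fin d → ℝ) :
    (augB B γ κ)ᵀ *ᵥ (augX X (ivEstimator X B *ᵥ u) *ᵥ vecId d) = Xi X B γ κ *ᵥ u := by
  rw [augB_transpose_mulVec_augX_mulVec_vecId, Xi_eq_smul_mul_ivEstimator, smul_mulVec,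
    mulVec_mulVec]

variable (l : Fin p → ℕ) (W : Fin p → Matrix (Fin d) (Fin d) ℝ)
  (z : Fin T → (j : Fin p) → Fin (l j + 1) → ℝ) (y : Fin T → Fin d → ℝ)
  (φ : ((j : Fin p) × Fin (l j + 1)) → ℝ)

theorem betaOf_eq_ivEstimator_mulVec :
    betaOf l W z y X B φ = ivEstimator X B *ᵥ (enu y - YW l W z y *ᵥ φ) := by
  rw [betaOf, ivEstimator, mulVec_eq_sum φ (YW l W z y)]
  simp only [op_smul_eq_smul]
  rfl

end Profiled

/-- simplify_LASSO: `Bᵀ X_{β(φ)} vec(I_d) = Ξ (y^ν − Y_W φ)`;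
consequently `Bᵀy − BᵀV φ − Bᵀ X_{β(φ)} vec(I_d)
  = (Bᵀy − Ξ y^ν) − (BᵀV − Ξ Y_W) φ`. -/
theorem statement9 (d T p r v : ℕ) (hd : 0 < d) (hT : 0 < T) (hp : 0 < p)
    (hr : 0 < r) (hv : 0 < v)
    (l : Fin p → ℕ) (W : Fin p → Matrix (Fin d) (Fin d) ℝ)
    (z : Fin T → (j : Fin p) → Fin (l j + 1) → ℝ) (hz : ∀ t j, z t j 0 = 1)
    (y : Fin T → Fin d → ℝ) (X : Fin T → Matrix (Fin d) (Fin r) ℝ)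
    (B : Fin T → Matrix (Fin d) (Fin v) ℝ) (γ : Fin v → ℝ) (κ : ℝ)
    (hGram : IsUnit (Gram X B))
    (φ : ((j : Fin p) × Fin (l j + 1)) → ℝ) :
    (augB B γ κ)ᵀ.mulVec ((augX X (betaOf l W z y X B φ)).mulVec (vecId d))
        = (Xi X B γ κ).mulVec (enu y - (YW l W z y).mulVec φ)
    ∧ (augB B γ κ)ᵀ.mulVec (yvec y) - ((augB B γ κ)ᵀ * Vmat l W z y).mulVec φ
        - (augB B γ κ)ᵀ.mulVec ((augX X (betaOf l W z y X B φ)).mulVec (vecId d))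
      = ((augB B γ κ)ᵀ.mulVec (yvec y) - (Xi X B γ κ).mulVec (enu y))
        - ((augB B γ κ)ᵀ * Vmat l W z y - Xi X B γ κ * YW l W z y).mulVec φ := by
  have fitted_eq : (augB B γ κ)ᵀ *ᵥ (augX X (betaOf l W z y X B φ) *ᵥ vecId d)
      = Xi X B γ κ *ᵥ (enu y - YW l W z y *ᵥ φ) := by
    rw [betaOf_eq_ivEstimator_mulVec, augB_transpose_mulVec_augX_ivEstimator_mulVec_vecId]
  refine ⟨fitted_eq, ?_⟩
  rw [fitted_eq, mulVec_sub, sub_mulVec, mulVec_mulVec]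
  abel
end
end
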